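/- For every sequence t_1, t_2, ... of rationals, the formal power series P = P(x,z;t) satisfies the functional equation P = 1 + z*P + \sum_{p\ge 1} t_p x^p P^p + z*\sum_{p\ge 1} t_p x^p P^{p+1} in \mathbb{Q}[[x,z]], where the two infinite series converge coefficientwise (for each pair (m,j), only finitely many summands contribute to the coefficient of x^m z^j). -/

import Mathlib

open Finset

inductive Step : Type
  | u | d | h
deriving DecidableEq

/-- Lengths of maximal blocks of letters with `wt s ≠ none`, weighted by `wt`. -/
def runs (wt : Step → Option ℕ) : List Step → List ℕ
  | [] => []
  | s :: l =>
    match wt s, runs wt l with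
    | none, r => r
    | some n, r =>
      match l with
      | [] => [n]
      | s' :: _ =>
        match wt s' with
        | none => n :: r
        | some _ =>
          match r with
          | a :: rest => (n + a) :: rest
          | [] => [n]

def uRuns : List Step → List ℕ :=
  runs (fun s => match s with | Step.u => some 1 | _ => none)

def uhRuns (k : ℕ) : List Step → List ℕ :=
  runs (fun s => match s with | Step.u => some 1 | Step.h => some k | Step.d => none)

def alpha (i : ℕ) (w : List Step) : ℕ := (uRuns w).count i

def beta (i : ℕ) (w : List Step) : ℕ := (uRuns w).tail.count i

def IsNonneg (w : List Step) : Prop :=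
  ∀ i : ℕ, (w.take i).count Step.d ≤ (w.take i).count Step.u

def pathSet (m j : ℕ) : Set (List Step) :=
  {w | w.count Step.u = m ∧ w.count Step.d = m ∧ w.count Step.h = j ∧ IsNonneg w}

/-- no horizontal step lies on the x-axis -/
def NoLowH (w : List Step) : Prop :=
  ∀ (i : ℕ) (hi : i < w.length), w[i]'hi = Step.h →
    (w.take i).count Step.u ≠ (w.take i).count Step.d

def qSet (m j : ℕ) : Set (List Step) :=
  {w | w ∈ pathSet m j ∧ NoLowH w}

/-- normalized partial Bell polynomial (r!/m!) B_{m,r}(1!t₁,2!t₂,…) -/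
def bellNorm (m r : ℕ) (t : ℕ → ℚ) : ℚ :=
  ∑ f : Fin m → Fin (m + 1),
    if (∑ i : Fin m, (f i : ℕ)) = r ∧ (∑ i : Fin m, ((i : ℕ) + 1) * (f i : ℕ)) = m then
      (r.factorial : ℚ) / (∏ i : Fin m, ((f i : ℕ).factorial : ℚ)) * ∏ i : Fin m, t ((i : ℕ) + 1) ^ (f i : ℕ)
    else 0

/-- normalized potential polynomial  P_p^{(lam)}(1!t₁,2!t₂,…)/p! -/
def potential (lam p : ℕ) (t : ℕ → ℚ) : ℚ :=
  ∑ r ∈ Finset.range (p + 1), (Nat.choose lam r : ℚ) * bellNorm p r t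


noncomputable def pathGF (t : ℕ → ℚ) : MvPowerSeries (Fin 2) ℚ :=
  fun d => ∑ᶠ w ∈ pathSet (d 0) (d 1), ∏ i ∈ Finset.Icc 1 (d 0), t i ^ alpha i w

namespace PathAux

/-- words from height `l` down to height `0`, with `m` up-steps and `j` horizontal steps -/
def Good : List Step → ℕ → ℕ → ℕ → Prop
  | [], l, m, j => l = 0 ∧ m = 0 ∧ j = 0
  | Step.h :: w, l, m, j => 1 ≤ j ∧ Good w l m (j - 1)
  | Step.d :: w, l, m, j => 1 ≤ l ∧ Good w (l - 1) m j
  | Step.u :: w, l, m, j => 1 ≤ m ∧ Good w (l + 1) (m - 1) j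

def T (t : ℕ → ℚ) (p : ℕ) : ℚ := if p = 0 then 1 else t p

/-- weight of a word preceded by `p` pending up-steps -/
def V (t : ℕ → ℚ) : List Step → ℕ → ℚ
  | [], p => T t p
  | Step.h :: w, p => T t p * V t w 0
  | Step.d :: w, p => T t p * V t w 0
  | Step.u :: w, p => V t w (p + 1)

instance : Finite Step :=
  Finite.of_surjective (fun i : Fin 3 => if i = 0 then Step.u else if i = 1 then Step.d else Step.h)
    (by
      intro s
      cases s
      · exact ⟨0, by simp⟩
      · exact ⟨1, by simp⟩
      · exact ⟨2, by simp⟩)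

theorem good_length (w : List Step) : ∀ l m j, Good w l m j → w.length = 2 * m + j + l := by
  induction w with
  | nil => intro l m j h; simp only [Good] at h; simp; omega
  | cons s w ih =>
    intro l m j h
    cases s <;> simp only [Good] at h <;> have := ih _ _ _ h.2 <;> simp only [List.length_cons] <;> omega

def S (l m j : ℕ) : Set (List Step) := {w | Good w l m j}

theorem S_finite (l m j : ℕ) : (S l m j).Finite :=
  (List.finite_length_eq Step (2 * m + j + l)).subset (fun w hw => good_length w _ _ _ hw)

noncomputable def c (t : ℕ → ℚ) (p l m j : ℕ) : ℚ := ∑ᶠ w ∈ S l m j, V t w p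

def B (P : Prop) (A : Set (List Step)) : Set (List Step) := {w | P ∧ w ∈ A}

theorem B_finite (P : Prop) (A : Set (List Step)) (h : A.Finite) : (B P A).Finite :=
  h.subset (fun _ hw => hw.2)

theorem sum_B (P : Prop) [Decidable P] (A : Set (List Step)) (f : List Step → ℚ) :
    ∑ᶠ w ∈ B P A, f w = if P then ∑ᶠ w ∈ A, f w else 0 := by
  by_cases h : P
  · have : B P A = A := by ext w; simp [B, h]
    rw [this, if_pos h]
  · have : B P A = ∅ := by ext w; simp [B, h]
    rw [this, if_neg h]; simp

theorem S_eq (l m j : ℕ) : S l m j = B (l = 0 ∧ m = 0 ∧ j = 0) {[]} ∪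
    (List.cons Step.h '' B (1 ≤ j) (S l m (j - 1)) ∪
    (List.cons Step.d '' B (1 ≤ l) (S (l - 1) m j) ∪
    List.cons Step.u '' B (1 ≤ m) (S (l + 1) (m - 1) j))) := by
  ext w
  cases w with
  | nil => simp [S, B, Good]
  | cons s w => cases s <;> simp [S, B, Good]

theorem c_rec (t : ℕ → ℚ) (p l m j : ℕ) :
    c t p l m j = (if l = 0 ∧ m = 0 ∧ j = 0 then T t p else 0)
      + ((if 1 ≤ j then T t p * c t 0 l m (j - 1) else 0)
      + ((if 1 ≤ l then T t p * c t 0 (l - 1) m j else 0)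
      + (if 1 ≤ m then c t (p + 1) (l + 1) (m - 1) j else 0))) := by
  have inj : ∀ (s : Step) (A : Set (List Step)), Set.InjOn (List.cons s) A := by
    intro s A x _ y _ h; simpa using h
  have f0 := B_finite (l = 0 ∧ m = 0 ∧ j = 0) {[]} (Set.finite_singleton _)
  have f1 := (B_finite (1 ≤ j) _ (S_finite l m (j - 1)))
  have f2 := (B_finite (1 ≤ l) _ (S_finite (l - 1) m j))
  have f3 := (B_finite (1 ≤ m) _ (S_finite (l + 1) (m - 1) j))
  have g1 := f1.image (List.cons Step.h)
  have g2 := f2.image (List.cons Step.d)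
  have g3 := f3.image (List.cons Step.u)
  unfold c
  rw [S_eq l m j, finsum_mem_union _ f0 (g1.union (g2.union g3)),
    finsum_mem_union _ g1 (g2.union g3), finsum_mem_union _ g2 g3,
    finsum_mem_image (inj _ _), finsum_mem_image (inj _ _), finsum_mem_image (inj _ _)]
  · simp only [V]
    rw [sum_B, sum_B, sum_B, sum_B, finsum_mem_singleton,
      ← mul_finsum_mem _ _, ← mul_finsum_mem _ _]
    rfl
  · rw [Set.disjoint_left]; rintro w ⟨a, _, rfl⟩ ⟨b, _, hb⟩; simp at hb
  · rw [Set.disjoint_left]; rintro w ⟨a, _, rfl⟩ (⟨b, _, hb⟩ | ⟨b, _, hb⟩) <;> simp at hb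
  · rw [Set.disjoint_left]
    rintro w ⟨_, ha⟩ hb
    rw [Set.mem_singleton_iff] at ha
    subst ha
    rcases hb with ⟨b, _, hb⟩ | ⟨b, _, hb⟩ | ⟨b, _, hb⟩ <;> simp at hb

noncomputable def H (t : ℕ → ℚ) (p l : ℕ) : MvPowerSeries (Fin 2) ℚ :=
  fun d => c t p l (d 0) (d 1)

theorem coeff_H (t : ℕ → ℚ) (p l : ℕ) (d : Fin 2 →₀ ℕ) :
    MvPowerSeries.coeff d (H t p l) = c t p l (d 0) (d 1) := rfl

theorem coeff_X_mul' (s : Fin 2) (f : MvPowerSeries (Fin 2) ℚ) (d : Fin 2 →₀ ℕ) :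
    MvPowerSeries.coeff d (MvPowerSeries.X s * f) =
      if 1 ≤ d s then MvPowerSeries.coeff (d - Finsupp.single s 1) f else 0 := by
  rw [MvPowerSeries.X, MvPowerSeries.coeff_monomial_mul]
  simp [Finsupp.single_le_iff]

open MvPowerSeries in
theorem H_zero (t : ℕ → ℚ) (p : ℕ) :
    H t p 0 = C (T t p) + X 1 * (C (T t p) * H t 0 0) + X 0 * H t (p + 1) 1 := by
  ext d
  rw [map_add, map_add, coeff_X_mul', coeff_X_mul', coeff_C, coeff_C_mul, coeff_H, coeff_H, coeff_H,
    c_rec]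
  have : (d = 0) ↔ (d 0 = 0 ∧ d 1 = 0) := by
    rw [Finsupp.ext_iff, Fin.forall_fin_two]; rfl
  simp [this, add_assoc]

open MvPowerSeries in
theorem H_succ (t : ℕ → ℚ) (p l : ℕ) :
    H t p (l + 1) = X 1 * (C (T t p) * H t 0 (l + 1)) + C (T t p) * H t 0 l
      + X 0 * H t (p + 1) (l + 2) := by
  ext d
  rw [map_add, map_add, coeff_X_mul', coeff_X_mul', coeff_C_mul, coeff_C_mul, coeff_H, coeff_H,
    coeff_H, coeff_H, c_rec]
  simp [add_assoc]

open MvPowerSeries in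
theorem H_mul (t : ℕ → ℚ) (k p l : ℕ) : H t p (l + k + 1) = H t p l * H t 0 k := by
  have key : ∀ (n p l : ℕ) (d : Fin 2 →₀ ℕ), 2 * d 0 + d 1 + l < n →
      coeff d (H t p (l + k + 1) - H t p l * H t 0 k) = 0 := by
    intro n
    induction n with
    | zero => intro p l d h; omega
    | succ n ih =>
      intro p l d hd
      have e1 : 1 ≤ d 1 → coeff (d - Finsupp.single 1 1)
          (H t 0 (l + k + 1) - H t 0 l * H t 0 k) = 0 := by
        intro h; apply ih; simp; omega
      have e2 : 1 ≤ d 0 → coeff (d - Finsupp.single 0 1)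
          (H t (p + 1) (l + 1 + k + 1) - H t (p + 1) (l + 1) * H t 0 k) = 0 := by
        intro h; apply ih; simp; omega
      cases l with
      | zero =>
        have : H t p (0 + k + 1) - H t p 0 * H t 0 k =
            X 1 * (C (T t p) * (H t 0 (0 + k + 1) - H t 0 0 * H t 0 k))
            + X 0 * (H t (p + 1) (0 + 1 + k + 1) - H t (p + 1) (0 + 1) * H t 0 k) := by
          rw [H_zero t p, H_succ t p, show 0 + 1 + k + 1 = 0 + k + 2 by omega,
            show 0 + k = k by omega]
          ring
        rw [this, map_add, coeff_X_mul', coeff_X_mul', coeff_C_mul]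
        split_ifs with h1 h2 h2
        · rw [e1 h1, e2 h2]; simp
        · rw [e1 h1]; simp
        · rw [e2 h2]; simp
        · simp
      | succ l =>
        have e3 := ih 0 l d (by omega)
        have : H t p (l + 1 + k + 1) - H t p (l + 1) * H t 0 k =
            X 1 * (C (T t p) * (H t 0 (l + 1 + k + 1) - H t 0 (l + 1) * H t 0 k))
            + C (T t p) * (H t 0 (l + k + 1) - H t 0 l * H t 0 k)
            + X 0 * (H t (p + 1) (l + 1 + 1 + k + 1) - H t (p + 1) (l + 1 + 1) * H t 0 k) := by
          rw [H_succ t p l, H_succ t p (l + 1 + k), show l + 1 + 1 + k + 1 = l + 1 + k + 2 by omega,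
            show l + 1 + k = l + k + 1 by omega]
          ring
        rw [this, map_add, map_add, coeff_X_mul', coeff_X_mul', coeff_C_mul, coeff_C_mul, e3]
        split_ifs with h1 h2 h2
        · rw [e1 h1, e2 h2]; simp
        · rw [e1 h1]; simp
        · rw [e2 h2]; simp
        · simp
  ext d
  have := key _ p l d (Nat.lt_succ_self _)
  rw [map_sub, sub_eq_zero] at this
  exact this

theorem H_pow (t : ℕ → ℚ) (l : ℕ) : H t 0 l = H t 0 0 ^ (l + 1) := by
  induction l with
  | zero => simp
  | succ l ih =>
    have := H_mul t l 0 0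
    rw [show l + 1 = 0 + l + 1 by omega, this, ih]; ring

open MvPowerSeries in
theorem H_unroll (t : ℕ → ℚ) (m : ℕ) :
    H t 0 0 = 1 + X 1 * H t 0 0 + (∑ p ∈ Finset.Icc 1 m, C (t p) * X 0 ^ p * H t 0 0 ^ p)
      + X 1 * (∑ p ∈ Finset.Icc 1 m, C (t p) * X 0 ^ p * H t 0 0 ^ (p + 1))
      + X 0 ^ (m + 1) * H t (m + 1) (m + 1) := by
  induction m with
  | zero => 
    have := H_zero t 0
    simpa [T] using this
  | succ m ih =>
    rw [Finset.sum_Icc_succ_top (by omega), Finset.sum_Icc_succ_top (by omega)]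
    have h1 := H_succ t (m + 1) m
    have hT : T t (m + 1) = t (m + 1) := by simp [T]
    rw [hT, H_pow t (m + 1), H_pow t m] at h1
    rw [h1] at ih
    rw [show m + 1 + 1 = m + 2 by omega] at *
    linear_combination ih

/- weights -/

def startsU : List Step → Prop
  | Step.u :: _ => True
  | _ => False

theorem uRuns_d (w : List Step) : uRuns (Step.d :: w) = uRuns w := by
  simp [uRuns, runs]

theorem uRuns_h (w : List Step) : uRuns (Step.h :: w) = uRuns w := by
  simp [uRuns, runs]

theorem uRuns_u_nil : uRuns [Step.u] = [1] := by
  simp [uRuns, runs]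

theorem uRuns_ud (w : List Step) : uRuns (Step.u :: Step.d :: w) = 1 :: uRuns w := by
  simp [uRuns, runs]

theorem uRuns_uh (w : List Step) : uRuns (Step.u :: Step.h :: w) = 1 :: uRuns w := by
  simp [uRuns, runs]

theorem uRuns_uu (w : List Step) (a : ℕ) (r : List ℕ) (h : uRuns (Step.u :: w) = a :: r) :
    uRuns (Step.u :: Step.u :: w) = (1 + a) :: r := by
  unfold uRuns at *
  rw [runs, h]

/-- joint description of runs and weights -/
theorem main_runs (t : ℕ → ℚ) (w : List Step) :
    (∀ i ∈ uRuns w, 1 ≤ i ∧ i ≤ w.count Step.u) ∧ V t w 0 = ((uRuns w).map t).prod ∧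
    ∃ a r, uRuns (Step.u :: w) = a :: r ∧ 1 ≤ a ∧ a ≤ w.count Step.u + 1 ∧
      (∀ i ∈ r, 1 ≤ i ∧ i ≤ w.count Step.u) ∧
      ∀ p, V t w (p + 1) = t (p + a) * (r.map t).prod := by
  induction w with
  | nil =>
    refine ⟨by simp [uRuns, runs], by simp [uRuns, runs, V, T], 1, [], uRuns_u_nil, ?_⟩
    simp [V, T]
  | cons s w ih =>
    obtain ⟨h1, h2, a, r, h3, h4, h5, h6, h7⟩ := ih
    cases s with
    | u =>
      refine ⟨?_, ?_, 1 + a, r, uRuns_uu w a r h3, by omega, ?_, ?_, ?_⟩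
      · rw [h3]
        intro i hi
        simp only [List.count_cons_self]
        rcases List.mem_cons.1 hi with rfl | hi
        · omega
        · have := h6 i hi; omega
      · rw [h3]
        simp only [V]
        rw [h7]; simp
      · simp only [List.count_cons_self]; omega
      · intro i hi
        have := h6 i hi
        simp only [List.count_cons_self]; omega
      · intro p
        simp only [V]
        rw [h7, show p + 1 + a = p + (1 + a) by omega]
    | d =>
      have hc : (Step.d :: w).count Step.u = w.count Step.u := by simp
      rw [hc, uRuns_d]
      refine ⟨h1, by simp [V, T, h2], 1, uRuns w, uRuns_ud w, le_rfl, by omega, h1, ?_⟩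
      intro p; simp [V, T, h2]
    | h =>
      have hc : (Step.h :: w).count Step.u = w.count Step.u := by simp
      rw [hc, uRuns_h]
      refine ⟨h1, by simp [V, T, h2], 1, uRuns w, uRuns_uh w, le_rfl, by omega, h1, ?_⟩
      intro p; simp [V, T, h2]

theorem weight_eq (t : ℕ → ℚ) (w : List Step) :
    ∏ i ∈ Finset.Icc 1 (w.count Step.u), t i ^ alpha i w = V t w 0 := by
  obtain ⟨h1, h2, -⟩ := main_runs t w
  rw [h2, Finset.prod_list_map_count]
  symm
  apply Finset.prod_subset
  · intro i hi
    rw [List.mem_toFinset] at hi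
    exact Finset.mem_Icc.2 (h1 i hi)
  · intro i _ hi
    rw [List.mem_toFinset] at hi
    rw [List.count_eq_zero_of_not_mem hi, pow_zero]

theorem good_iff (w : List Step) : ∀ l m j, Good w l m j ↔
    (w.count Step.u = m ∧ w.count Step.d = m + l ∧ w.count Step.h = j ∧
      ∀ i : ℕ, (w.take i).count Step.d ≤ (w.take i).count Step.u + l) := by
  induction w with
  | nil => intro l m j; simp [Good]; omega
  | cons s w ih =>
    intro l m j
    have hall : (∀ i : ℕ, ((s :: w).take i).count Step.d ≤ ((s :: w).take i).count Step.u + l) ↔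
        (∀ i : ℕ, (s :: w.take i).count Step.d ≤ (s :: w.take i).count Step.u + l) := by
      constructor
      · intro h i
        exact h (i + 1)
      · intro h i
        cases i with
        | zero => simp
        | succ i => exact h i
    rw [hall]
    cases s <;> simp only [Good] <;> rw [ih] <;> simp
    · constructor
      · rintro ⟨h1, h2, h3, h4, h5⟩
        refine ⟨by omega, by omega, h4, fun i => ?_⟩
        have := h5 i; omega
      · rintro ⟨h1, h2, h3, h4⟩
        refine ⟨by omega, by omega, by omega, h3, fun i => ?_⟩
        have := h4 i; omega
    · constructor
      · rintro ⟨h1, h2, h3, h4, h5⟩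
        refine ⟨by omega, by omega, h4, fun i => ?_⟩
        have := h5 i; omega
      · rintro ⟨h1, h2, h3, h4⟩
        have h0 := h4 0
        simp at h0
        refine ⟨by omega, by omega, by omega, h3, fun i => ?_⟩
        have := h4 i; omega
    · constructor
      · rintro ⟨h1, h2, h3, h4, h5⟩
        exact ⟨h2, h3, by omega, h5⟩
      · rintro ⟨h1, h2, h3, h4⟩
        exact ⟨by omega, h1, h2, by omega, h4⟩

theorem pathGF_eq (t : ℕ → ℚ) : pathGF t = H t 0 0 := by
  funext d
  have hS : pathSet (d 0) (d 1) = S 0 (d 0) (d 1) := by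
    ext w
    simp only [S, Set.mem_ofPred_eq, good_iff, pathSet, IsNonneg, add_zero]
  change ∑ᶠ w ∈ pathSet (d 0) (d 1), _ = ∑ᶠ w ∈ S 0 (d 0) (d 1), _
  rw [← hS]
  apply finsum_mem_congr rfl
  intro w hw
  rw [← hw.1]
  exact weight_eq t w

end PathAux

/-- The functional equation P = 1 + zP + ∑_{p≥1} t_p x^p P^p + z ∑_{p≥1} t_p x^p P^{p+1},
stated coefficientwise: for the coefficient of x^m z^j only the summands with p ≤ m
contribute, so the infinite series may be truncated at p = m. -/
theorem stmt0 (t : ℕ → ℚ) (m j : ℕ) :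
    MvPowerSeries.coeff (R := ℚ) (Finsupp.single (0 : Fin 2) m + Finsupp.single (1 : Fin 2) j)
        (pathGF t) =
    MvPowerSeries.coeff (R := ℚ) (Finsupp.single (0 : Fin 2) m + Finsupp.single (1 : Fin 2) j)
      (1 + MvPowerSeries.X 1 * pathGF t
        + (∑ p ∈ Finset.Icc 1 m,
            MvPowerSeries.C (σ := Fin 2) (R := ℚ) (t p) * MvPowerSeries.X 0 ^ p * pathGF t ^ p)
        + MvPowerSeries.X 1 * ∑ p ∈ Finset.Icc 1 m,
            MvPowerSeries.C (σ := Fin 2) (R := ℚ) (t p) * MvPowerSeries.X 0 ^ p * pathGF t ^ (p + 1)) := by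
  rw [PathAux.pathGF_eq]
  conv_lhs => rw [PathAux.H_unroll t m]
  rw [map_add _ _ (MvPowerSeries.X 0 ^ (m + 1) * PathAux.H t (m + 1) (m + 1))]
  rw [MvPowerSeries.X_pow_eq, MvPowerSeries.coeff_monomial_mul, if_neg, add_zero]
  intro h
  have := h 0
  simp at this
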